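/- arXiv:1104.4551 — 2 statements merged into one kernel-verified Lean document; each statement's English description precedes it below -/
import Mathlib

section
/- (Local light-cone version.) Let A = {p + t•v : t ∈ ℝ} be an inertial observer in Minkowski spacetime, with v a future-directed unit timelike vector, and for an event x set τ(x) = η(x − p, v) and ρ(x) = √(−η(w,w)) where w = (x − p) − τ(x)•v. Call a bijection f of Minkowski spacetime a local-cone automorphism relative to A if: f(A) = A; f is increasing on A (for a, b ∈ A, τ(a) < τ(b) implies τ(f(a)) < τ(f(b))); and for every a ∈ A and every event x, x lies on the backward light cone of a (η(x − a, x − a) = 0 and (x − a) 0 ≤ 0) iff f(x) lies on the backward light cone of f(a), and x lies on the forward light cone of a (η(x − a, x − a) = 0 and (x − a) 0 ≥ 0) iff f(x) lies on the forward light cone of f(a). If R is an equivalence relation on Minkowski spacetime that is nontrivial (not all pairs of events are related, and some event on A is related to some event off A) and invariant under every local-cone automorphism relative to A, then R = R_1 or R = R_{−1}, i.e., R is the observed-simultaneity relation (x R y ↔ τ(x) + ρ(x) = τ(y) + ρ(y)) or its dual (x R y ↔ τ(x) − ρ(x) = τ(y) − ρ(y)). -/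
/-!
Write an event as `p + τ • v + w` with `w` orthogonal to `v`. In terms of the retarded and advanced
times `lo = τ - ρ ≤ hi = τ + ρ`, an event lies on the forward (backward) cone of `p + t • v` iff
`lo = t` (`hi = t`), and it lies on the observer iff `lo = hi` (`forward_iff`, `backward_iff`,
`mem_line_iff`). Hence any bijection of spacetime acting on both `lo` and `hi` through one strictly
increasing `φ : ℝ → ℝ` is a local-cone automorphism. Two families suffice: transpositions of two
events with the same `(lo, hi)`, and for each increasing bijection `φ` of `ℝ` the radial map
`radial`, which keeps the spatial direction.

The rest is combinatorial (`core`). Suppose the event at time `t` on the observer is related to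
some `x` off it, with `(lo, hi) = (a, b)`, `a < b`; by transpositions it is then related to every
such `x`. If two distinct observer events are related, affine `φ` show that all of them are; since
every event is related to some observer event, `R` would be total. If `t ∉ {a, b}`, a piecewise
linear `φ` combined with an affine one produces two distinct related observer events
(`exists_distinct`). So `t = a` or `t = b`; every event is then related to the observer event at
time `lo` (respectively `hi`), and `R` is equality of `lo` (respectively `hi`).
-/

/-- Minkowski spacetime: ℝ⁴ as functions `Fin 4 → ℝ`. -/
abbrev M4 : Type := Fin 4 → ℝ

/-- The Minkowski bilinear form. -/
def eta (x y : M4) : ℝ := x 0 * y 0 - x 1 * y 1 - x 2 * y 2 - x 3 * y 3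

/-- Time coordinate of an event relative to the observer `{p + t•v}`. -/
def tau (p v x : M4) : ℝ := eta (x - p) v

/-- Spatial radius of an event relative to the observer `{p + t•v}`. -/
noncomputable def rho (p v x : M4) : ℝ :=
  Real.sqrt (-(eta ((x - p) - tau p v x • v) ((x - p) - tau p v x • v)))

/-- `x` lies on the backward light cone of `a`. -/
def onBackwardCone (a x : M4) : Prop := eta (x - a) (x - a) = 0 ∧ (x - a) 0 ≤ 0

/-- `x` lies on the forward light cone of `a`. -/
def onForwardCone (a x : M4) : Prop := eta (x - a) (x - a) = 0 ∧ (x - a) 0 ≥ 0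

/-! ### Combinatorics of the two cone times -/

/-- The affine map sending `t` to `r` with slope `k > 0` is an increasing bijection. -/
lemma affine_bij (k t r : ℝ) (hk : 0 < k) :
    ∃ φ ψ : ℝ → ℝ, StrictMono φ ∧ StrictMono ψ ∧ (∀ s, ψ (φ s) = s) ∧ (∀ s, φ (ψ s) = s) ∧
      ∀ s, φ s = r + k * (s - t) := by
  refine ⟨fun s => r + k * (s - t), fun s => t + (s - r) / k, ?_, ?_, ?_, ?_, fun _ => rfl⟩
  · intro x y h
    have := mul_lt_mul_of_pos_left h hk
    dsimp only; linarith
  · intro x y h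
    have : (x - r) / k < (y - r) / k := by gcongr
    dsimp only; linarith
  · intro s; field_simp; ring
  · intro s; field_simp; ring

/-- Some increasing bijection fixes everything up to `c` and moves everything above `c` up; the
witness has slope `1` below `c` and slope `2` above. -/
lemma kink_bij (c : ℝ) :
    ∃ φ ψ : ℝ → ℝ, StrictMono φ ∧ StrictMono ψ ∧ (∀ s, ψ (φ s) = s) ∧ (∀ s, φ (ψ s) = s) ∧
      (∀ s, s ≤ c → φ s = s) ∧ (∀ s, c < s → s < φ s) := by
  refine ⟨fun s => s + max 0 (s - c), fun s => s - max 0 (s - c) / 2, ?_, ?_, ?_, ?_, ?_, ?_⟩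
  · intro x y h; dsimp only
    rcases max_cases 0 (x - c) with h1 | h1 <;> rcases max_cases 0 (y - c) with h2 | h2 <;> linarith
  · intro x y h; dsimp only
    rcases max_cases 0 (x - c) with h1 | h1 <;> rcases max_cases 0 (y - c) with h2 | h2 <;> linarith
  · intro x; dsimp only
    rcases max_cases 0 (x - c) with h1 | h1 <;> rw [h1.1]
    · rcases max_cases 0 (x + 0 - c) with h2 | h2 <;> linarith
    · rcases max_cases 0 (x + (x - c) - c) with h2 | h2 <;> linarith
  · intro x; dsimp only
    rcases max_cases 0 (x - c) with h1 | h1 <;> rw [h1.1]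
    · rcases max_cases 0 (x - 0 / 2 - c) with h2 | h2 <;> linarith
    · rcases max_cases 0 (x - (x - c) / 2 - c) with h2 | h2 <;> linarith
  · intro s hs
    rcases max_cases 0 (s - c) with h1 | h1 <;> dsimp only <;> linarith
  · intro s hs
    rcases max_cases 0 (s - c) with h1 | h1 <;> dsimp only <;> linarith

/-- Here `Q t a b` means that the observer event at time `t` is related to the events with cone
times `(a, b)`; thus `Q t t' t'` relates the observer events at times `t` and `t'`. If `t` is not
one of the two cone times, then two distinct observer events are related. -/
lemma exists_distinct (Q : ℝ → ℝ → ℝ → Prop)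
    (hQ : ∀ φ ψ : ℝ → ℝ, StrictMono φ → StrictMono ψ → (∀ s, ψ (φ s) = s) → (∀ s, φ (ψ s) = s) →
      ∀ t a b, Q t a b → Q (φ t) (φ a) (φ b))
    (hL : ∀ t t' a b, Q t a b → Q t' a b → Q t t' t')
    {t a b : ℝ} (hab : a < b) (h : Q t a b) (hta : t ≠ a) (htb : t ≠ b) :
    ∃ t t' : ℝ, t ≠ t' ∧ Q t t' t' := by
  rcases lt_or_gt_of_ne htb with hlt | hgt
    -- A kink at `max t a` moves only `b`; the affine map that also fixes `a` and moves `b` to the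
    -- same place moves `t`.
  · obtain ⟨φ, ψ, h1, h2, h3, h4, h5, h6⟩ := kink_bij (max t a)
    have hb := h6 b (max_lt hlt hab)
    have k1 := hQ φ ψ h1 h2 h3 h4 t a b h
    rw [h5 t (le_max_left _ _), h5 a (le_max_right _ _)] at k1
    have hba : 0 < b - a := by linarith
    have hk : 1 < (φ b - a) / (b - a) := by
      rw [lt_div_iff₀ hba]; linarith
    obtain ⟨α, β, g1, g2, g3, g4, g5⟩ := affine_bij ((φ b - a) / (b - a)) a a (by linarith)
    have k2 := hQ α β g1 g2 g3 g4 t a b h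
    have ea : α a = a := by rw [g5]; ring
    have eb : α b = φ b := by rw [g5]; field_simp; ring
    rw [ea, eb] at k2
    refine ⟨t, α t, ?_, hL _ _ _ _ k1 k2⟩
    rw [g5]
    intro e
    have : ((φ b - a) / (b - a) - 1) * (t - a) = 0 := by linear_combination -e
    rcases mul_eq_zero.mp this with h | h
    · linarith
    · exact hta (by linarith)
  · obtain ⟨φ, ψ, h1, h2, h3, h4, h5, h6⟩ := kink_bij b
    have k1 := hQ φ ψ h1 h2 h3 h4 t a b h
    rw [h5 a hab.le, h5 b le_rfl] at k1
    exact ⟨t, φ t, (h6 t hgt).ne, hL _ _ _ _ h k1⟩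

/-- Abstract form of the theorem: `ι` parametrizes the observer, `lo` and `hi` are the two cone
times. -/
lemma core {X : Type*} (ι : ℝ → X) (lo hi : X → ℝ)
    (hloι : ∀ t, lo (ι t) = t) (hhiι : ∀ t, hi (ι t) = t)
    (hdiag : ∀ x, lo x = hi x → x = ι (lo x)) (hle : ∀ x, lo x ≤ hi x)
    (hlift : ∀ φ ψ : ℝ → ℝ, StrictMono φ → StrictMono ψ → (∀ s, ψ (φ s) = s) →
      (∀ s, φ (ψ s) = s) →
      ∃ f : X → X, Function.Bijective f ∧ (∀ x, lo (f x) = φ (lo x)) ∧ ∀ x, hi (f x) = φ (hi x))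
    (R : X → X → Prop) (hequiv : Equivalence R) (hn₁ : ¬ ∀ x y, R x y)
    (hn₂ : ∃ t x, lo x ≠ hi x ∧ R (ι t) x)
    (hinv : ∀ f : X → X, Function.Bijective f → ∀ φ : ℝ → ℝ, StrictMono φ →
      (∀ x, lo (f x) = φ (lo x)) → (∀ x, hi (f x) = φ (hi x)) →
      ∀ x y, R x y ↔ R (f x) (f y)) :
    (∀ x y, R x y ↔ hi x = hi y) ∨ (∀ x y, R x y ↔ lo x = lo y) := by
  classical
  have hsame : ∀ t x y, lo x = lo y → hi x = hi y → R (ι t) x → R (ι t) y := by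
    intro t x y h1 h2 h
    -- If `ι t` is one of `x`, `y`, then both lie on the observer and coincide.
    by_cases e1 : ι t = x
    · have : lo x = hi x := by rw [← e1, hloι, hhiι]
      rwa [hdiag y (by rw [← h1, ← h2, this]), ← h1, ← hdiag x this]
    by_cases e2 : ι t = y
    · rw [← e2]; exact hequiv.refl _
    have := (hinv (Equiv.swap x y) (Equiv.swap x y).bijective id strictMono_id ?_ ?_ (ι t) x).1 h
    · rwa [Equiv.swap_apply_of_ne_of_ne e1 e2, Equiv.swap_apply_left] at this
    · intro z; rw [Equiv.swap_apply_def]; split_ifs with c d <;> simp [*]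
    · intro z; rw [Equiv.swap_apply_def]; split_ifs with c d <;> simp [*]
  let Q : ℝ → ℝ → ℝ → Prop := fun t a b => ∃ x, lo x = a ∧ hi x = b ∧ R (ι t) x
  have hQ : ∀ φ ψ : ℝ → ℝ, StrictMono φ → StrictMono ψ → (∀ s, ψ (φ s) = s) →
      (∀ s, φ (ψ s) = s) → ∀ t a b, Q t a b → Q (φ t) (φ a) (φ b) := by
    rintro φ ψ h1 h2 h3 h4 t a b ⟨x, hx1, hx2, hx⟩
    obtain ⟨f, hf, hlo, hhi⟩ := hlift φ ψ h1 h2 h3 h4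
    refine ⟨f x, by rw [hlo, hx1], by rw [hhi, hx2], ?_⟩
    have e : f (ι t) = ι (φ t) := by
      have := hdiag (f (ι t)) (by rw [hlo, hhi, hloι, hhiι])
      rwa [hlo, hloι] at this
    rw [← e]
    exact (hinv f hf φ h1 hlo hhi _ _).1 hx
  have hQR : ∀ t x, Q t (lo x) (hi x) → R (ι t) x := by
    rintro t x ⟨y, h1, h2, h⟩
    exact hsame t y x h1 h2 h
  have hRQ : ∀ t t', R (ι t) (ι t') → Q t t' t' := fun t t' h => ⟨ι t', hloι _, hhiι _, h⟩
  have hQL : ∀ t t', Q t t' t' → R (ι t) (ι t') := fun t t' h =>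
    hQR _ _ (by rwa [hloι, hhiι])
  have hL : ∀ t t' a b, Q t a b → Q t' a b → Q t t' t' := by
    rintro t t' a b ⟨x, h1, h2, h⟩ ⟨y, h3, h4, h'⟩
    exact hRQ _ _ (hequiv.trans h (hequiv.symm
      (hsame _ y x (h3.trans h1.symm) (h4.trans h2.symm) h')))
  obtain ⟨t₀, x₀, hx₀, hR₀⟩ := hn₂
  have hab : lo x₀ < hi x₀ := lt_of_le_of_ne (hle _) hx₀
  generalize ha : lo x₀ = a at *
  generalize hb : hi x₀ = b at *
  have h₀ : Q t₀ a b := ⟨x₀, ha, hb, hR₀⟩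
  -- Increasing affine maps carry `(a, b)` to any other pair of cone times.
  have hmove : ∀ x, lo x < hi x →
      R (ι (lo x + (hi x - lo x) / (b - a) * (t₀ - a))) x := by
    intro x hx
    have hba : 0 < b - a := by linarith
    obtain ⟨α, β, g1, g2, g3, g4, g5⟩ :=
      affine_bij ((hi x - lo x) / (b - a)) a (lo x) (div_pos (by linarith) hba)
    have k := hQ α β g1 g2 g3 g4 _ _ _ h₀
    have ea : α a = lo x := by rw [g5]; ring
    have eb : α b = hi x := by rw [g5]; field_simp; ring
    rw [ea, eb, g5] at k
    exact hQR _ _ k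
  have hnL : ∀ t t', t ≠ t' → ¬ R (ι t) (ι t') := by
    intro t t' hne h
    wlog hlt : t < t' generalizing t t'
    · exact this t' t hne.symm (hequiv.symm h) (lt_of_le_of_ne (not_lt.mp hlt) hne.symm)
    have hall' : ∀ r r', r < r' → R (ι r) (ι r') := by
      intro r r' hr
      have h0 : 0 < t' - t := by linarith
      obtain ⟨α, β, g1, g2, g3, g4, g5⟩ :=
        affine_bij ((r' - r) / (t' - t)) t r (div_pos (by linarith) h0)
      have k := hQ α β g1 g2 g3 g4 _ _ _ (hRQ _ _ h)
      have ea : α t = r := by rw [g5]; ring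
      have eb : α t' = r' := by rw [g5]; field_simp; ring
      rw [ea, eb] at k
      exact hQL _ _ k
    have hall : ∀ r r', R (ι r) (ι r') := by
      intro r r'
      rcases lt_trichotomy r r' with h | h | h
      · exact hall' _ _ h
      · rw [h]; exact hequiv.refl _
      · exact hequiv.symm (hall' _ _ h)
    have hev : ∀ x, ∃ r, R (ι r) x := by
      intro x
      rcases (hle x).lt_or_eq with h | h
      · exact ⟨_, hmove x h⟩
      · exact ⟨lo x, by rw [← hdiag x h]; exact hequiv.refl _⟩
    refine hn₁ fun x y => ?_
    obtain ⟨r, hr⟩ := hev x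
    obtain ⟨r', hr'⟩ := hev y
    exact hequiv.trans (hequiv.symm hr) (hequiv.trans (hall r r') hr')
  have hfin : ∀ g : X → ℝ, (∀ x, R (ι (g x)) x) → ∀ x y, R x y ↔ g x = g y := by
    intro g hg x y
    constructor
    · intro h
      by_contra hne
      exact hnL _ _ hne (hequiv.trans (hg x) (hequiv.trans h (hequiv.symm (hg y))))
    · intro h
      have := hg x
      rw [h] at this
      exact hequiv.trans (hequiv.symm this) (hg y)
  by_cases h1 : t₀ = a
  · right
    refine hfin lo fun x => ?_
    rcases (hle x).lt_or_eq with h | h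
    · have := hmove x h
      rwa [h1, sub_self, mul_zero, add_zero] at this
    · rw [← hdiag x h]; exact hequiv.refl _
  by_cases h2 : t₀ = b
  · left
    refine hfin hi fun x => ?_
    rcases (hle x).lt_or_eq with h | h
    · have := hmove x h
      rwa [h2, div_mul_cancel₀ _ (by linarith), add_sub_cancel] at this
    · rw [← h, ← hdiag x h]; exact hequiv.refl _
  obtain ⟨t, t', hne, h⟩ := exists_distinct Q hQ hL hab h₀ h1 h2
  exact absurd (hQL _ _ h) (hnL _ _ hne)

/-! ### Minkowski geometry relative to the observer -/

/-- The component of `x - p` orthogonal to `v`. -/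
def perp (p v x : M4) : M4 := (x - p) - tau p v x • v

lemma perp_orth {p v : M4} (hunit : eta v v = 1) (x : M4) : eta (perp p v x) v = 0 := by
  simp only [perp, tau, eta, Pi.sub_apply, Pi.smul_apply, smul_eq_mul] at *
  linear_combination (-((x 0 - p 0) * v 0 - (x 1 - p 1) * v 1 - (x 2 - p 2) * v 2
    - (x 3 - p 3) * v 3)) * hunit

lemma decomp (p v x : M4) : x = p + tau p v x • v + perp p v x := by
  simp only [perp]; abel

/-- By Cauchy-Schwarz; a quantitative form of the fact that vectors orthogonal to `v` are
spacelike. -/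
lemma time_sq_le {v w : M4} (hunit : eta v v = 1) (hw : eta w v = 0) :
    w 0 ^ 2 ≤ (v 0 ^ 2 - 1) * (-(eta w w)) := by
  simp only [eta] at *
  have h1 : (w 0 * v 0) ^ 2 = (w 1 * v 1 + w 2 * v 2 + w 3 * v 3) ^ 2 := by
    congr 1; linarith
  have h2 : (w 1 * v 1 + w 2 * v 2 + w 3 * v 3) ^ 2 ≤
      (v 1 ^ 2 + v 2 ^ 2 + v 3 ^ 2) * (w 1 ^ 2 + w 2 ^ 2 + w 3 ^ 2) := by
    nlinarith [sq_nonneg (w 1 * v 2 - w 2 * v 1), sq_nonneg (w 1 * v 3 - w 3 * v 1),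
      sq_nonneg (w 2 * v 3 - w 3 * v 2)]
  have h3 : v 1 ^ 2 + v 2 ^ 2 + v 3 ^ 2 = v 0 ^ 2 - 1 := by linarith
  rw [h3] at h2
  linarith

lemma one_le_sq {v : M4} (hunit : eta v v = 1) : 1 ≤ v 0 ^ 2 := by
  simp only [eta] at hunit
  nlinarith [sq_nonneg (v 1), sq_nonneg (v 2), sq_nonneg (v 3)]

lemma neg_eta_nonneg {v w : M4} (hunit : eta v v = 1) (hw : eta w v = 0) : 0 ≤ -(eta w w) := by
  by_contra hneg
  have h1 := time_sq_le hunit hw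
  have h2 := one_le_sq hunit
  have h3 : w 0 ^ 2 ≤ 0 := h1.trans (mul_nonpos_of_nonneg_of_nonpos (by linarith) (by linarith))
  simp only [eta] at hneg
  nlinarith [sq_nonneg (w 1), sq_nonneg (w 2), sq_nonneg (w 3)]

lemma eq_zero_of_eta {v w : M4} (hunit : eta v v = 1) (hw : eta w v = 0) (h : eta w w = 0) :
    w = 0 := by
  have h1 := time_sq_le hunit hw
  rw [h, neg_zero, mul_zero] at h1
  simp only [eta] at h
  have h0 : w 0 = 0 := by nlinarith
  rw [h0] at h
  ext i
  fin_cases i <;>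
    simp only [Fin.zero_eta, Fin.mk_one, Fin.reduceFinMk, Pi.zero_apply] <;>
    nlinarith [sq_nonneg (w 1), sq_nonneg (w 2), sq_nonneg (w 3)]

lemma rho_sq {p v : M4} (hunit : eta v v = 1) (x : M4) :
    rho p v x ^ 2 = -(eta (perp p v x) (perp p v x)) :=
  Real.sq_sqrt (neg_eta_nonneg hunit (perp_orth hunit x))

lemma rho_nonneg (p v x : M4) : 0 ≤ rho p v x := Real.sqrt_nonneg _

lemma perp_eq_zero {p v : M4} (hunit : eta v v = 1) {x : M4} (h : rho p v x = 0) :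
    perp p v x = 0 := by
  apply eq_zero_of_eta hunit (perp_orth hunit x)
  have := rho_sq (p := p) hunit x
  rw [h] at this
  linarith

lemma tau_mk {p v w : M4} (hunit : eta v v = 1) (hw : eta w v = 0) (s : ℝ) :
    tau p v (p + s • v + w) = s := by
  simp only [tau, eta, Pi.sub_apply, Pi.add_apply, Pi.smul_apply, smul_eq_mul] at *
  linear_combination s * hunit + hw

lemma perp_mk {p v w : M4} (hunit : eta v v = 1) (hw : eta w v = 0) (s : ℝ) :
    perp p v (p + s • v + w) = w := by
  rw [perp, tau_mk hunit hw]; abel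

lemma rho_mk {p v w : M4} (hunit : eta v v = 1) (hw : eta w v = 0) (s : ℝ) :
    rho p v (p + s • v + w) = Real.sqrt (-(eta w w)) := by
  change Real.sqrt (-(eta (perp p v _) (perp p v _))) = _
  rw [perp_mk hunit hw]

lemma eta_zero_left (v : M4) : eta 0 v = 0 := by simp [eta]

lemma tau_line {p v : M4} (hunit : eta v v = 1) (t : ℝ) : tau p v (p + t • v) = t := by
  simpa using tau_mk (p := p) hunit (eta_zero_left v) t

lemma rho_line {p v : M4} (hunit : eta v v = 1) (t : ℝ) : rho p v (p + t • v) = 0 := by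
  simpa [eta_zero_left] using rho_mk (p := p) hunit (eta_zero_left v) t

lemma eq_line {p v : M4} (hunit : eta v v = 1) {x : M4} (h : rho p v x = 0) :
    x = p + tau p v x • v := by
  conv_lhs => rw [decomp p v x, perp_eq_zero hunit h, add_zero]

lemma mem_line_iff {p v : M4} (hunit : eta v v = 1) (x : M4) :
    (∃ t : ℝ, x = p + t • v) ↔ rho p v x = 0 :=
  ⟨by rintro ⟨t, rfl⟩; exact rho_line hunit t, fun h => ⟨_, eq_line hunit h⟩⟩

lemma eta_sub_line {p v : M4} (hunit : eta v v = 1) (t : ℝ) (x : M4) :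
    eta (x - (p + t • v)) (x - (p + t • v)) = (tau p v x - t) ^ 2 - rho p v x ^ 2 := by
  rw [rho_sq hunit]
  have e : x - (p + t • v) = (tau p v x - t) • v + perp p v x := by
    simp only [perp, sub_smul]; abel
  rw [e]
  have hw := perp_orth (p := p) hunit x
  generalize perp p v x = w at *
  generalize tau p v x = s at *
  simp only [eta, Pi.add_apply, Pi.smul_apply, smul_eq_mul] at *
  linear_combination (s - t) ^ 2 * hunit + 2 * (s - t) * hw

/-- For a null separation from the observer, the sign of the frame time difference is the sign of
the difference of `τ`. -/
lemma time_sign {p v : M4} (hunit : eta v v = 1) (hfut : v 0 > 0) (t : ℝ) (x : M4)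
    (hnull : (tau p v x - t) ^ 2 = rho p v x ^ 2) :
    ((x - (p + t • v)) 0 ≤ 0 ↔ tau p v x - t ≤ 0) ∧
    ((x - (p + t • v)) 0 ≥ 0 ↔ tau p v x - t ≥ 0) := by
  have e : (x - (p + t • v)) 0 = (tau p v x - t) * v 0 + perp p v x 0 := by
    simp only [perp, Pi.sub_apply, Pi.add_apply, Pi.smul_apply, smul_eq_mul]; ring
  have hw := time_sq_le hunit (perp_orth (p := p) hunit x)
  rw [← rho_sq hunit, ← hnull] at hw
  rw [e]
  generalize perp p v x 0 = c at *
  generalize tau p v x - t = d at *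
  have hlt : d ≠ 0 → |c| < |d * v 0| := by
    intro hd
    apply sq_lt_sq.mp
    have : 0 < d ^ 2 := by positivity
    nlinarith
  rcases lt_trichotomy d 0 with hd | hd | hd
  · have h1 := hlt hd.ne
    have h2 : d * v 0 < 0 := mul_neg_of_neg_of_pos hd hfut
    rw [abs_of_neg h2] at h1
    have h3 := le_abs_self c
    constructor <;> constructor <;> intro h <;> linarith
  · subst hd
    have : c = 0 := by nlinarith
    simp [this]
  · have h1 := hlt hd.ne'
    have h2 : 0 < d * v 0 := mul_pos hd hfut
    rw [abs_of_pos h2] at h1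
    have h3 := neg_abs_le c
    constructor <;> constructor <;> intro h <;> linarith

lemma backward_iff {p v : M4} (hunit : eta v v = 1) (hfut : v 0 > 0) (t : ℝ) (x : M4) :
    onBackwardCone (p + t • v) x ↔ tau p v x + rho p v x = t := by
  have hr := rho_nonneg p v x
  rw [onBackwardCone, eta_sub_line hunit]
  constructor
  · rintro ⟨h1, h2⟩
    have hs := ((time_sign hunit hfut t x (by linarith)).1).1 h2
    rcases sq_eq_sq_iff_eq_or_eq_neg.mp (sub_eq_zero.mp h1) with h | h <;> linarith
  · intro h
    have h1 : (tau p v x - t) ^ 2 = rho p v x ^ 2 := by rw [← h]; ring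
    exact ⟨by linarith, (time_sign hunit hfut t x h1).1.2 (by linarith)⟩

lemma forward_iff {p v : M4} (hunit : eta v v = 1) (hfut : v 0 > 0) (t : ℝ) (x : M4) :
    onForwardCone (p + t • v) x ↔ tau p v x - rho p v x = t := by
  have hr := rho_nonneg p v x
  rw [onForwardCone, eta_sub_line hunit]
  constructor
  · rintro ⟨h1, h2⟩
    have hs := ((time_sign hunit hfut t x (by linarith)).2).1 h2
    rcases sq_eq_sq_iff_eq_or_eq_neg.mp (sub_eq_zero.mp h1) with h | h <;> linarith
  · intro h
    have h1 : (tau p v x - t) ^ 2 = rho p v x ^ 2 := by rw [← h]; ring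
    exact ⟨by linarith, (time_sign hunit hfut t x h1).2.2 (by linarith)⟩

/-! ### Radial maps -/

/-- The map applying `φ` to both cone times `τ ± ρ` and keeping the spatial direction. On the
observer the quotient is `0 / 0 = 0`, which is harmless since `perp` vanishes there. -/
noncomputable def radial (p v : M4) (φ : ℝ → ℝ) (x : M4) : M4 :=
  p + ((φ (tau p v x + rho p v x) + φ (tau p v x - rho p v x)) / 2) • v +
    ((φ (tau p v x + rho p v x) - φ (tau p v x - rho p v x)) / 2 / rho p v x) • perp p v x

lemma smul_orth {v w : M4} (c : ℝ) (hw : eta w v = 0) : eta (c • w) v = 0 := by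
  simp only [eta, Pi.smul_apply, smul_eq_mul] at *
  linear_combination c * hw

lemma tau_radial {p v : M4} (hunit : eta v v = 1) (φ : ℝ → ℝ) (x : M4) :
    tau p v (radial p v φ x) =
      (φ (tau p v x + rho p v x) + φ (tau p v x - rho p v x)) / 2 :=
  tau_mk hunit (smul_orth _ (perp_orth hunit x)) _

lemma perp_radial {p v : M4} (hunit : eta v v = 1) (φ : ℝ → ℝ) (x : M4) :
    perp p v (radial p v φ x) =
      ((φ (tau p v x + rho p v x) - φ (tau p v x - rho p v x)) / 2 / rho p v x) • perp p v x :=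
  perp_mk hunit (smul_orth _ (perp_orth hunit x)) _

lemma rho_radial {p v : M4} (hunit : eta v v = 1) {φ : ℝ → ℝ} (hφ : StrictMono φ) (x : M4) :
    rho p v (radial p v φ x) =
      (φ (tau p v x + rho p v x) - φ (tau p v x - rho p v x)) / 2 := by
  have hr := rho_nonneg p v x
  have hm : φ (tau p v x - rho p v x) ≤ φ (tau p v x + rho p v x) :=
    hφ.monotone (by linarith)
  rw [← sq_eq_sq₀ (rho_nonneg _ _ _) (by linarith), rho_sq hunit, perp_radial hunit]
  have hs : ∀ (c : ℝ) (w : M4), -(eta (c • w) (c • w)) = c ^ 2 * -(eta w w) := by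
    intro c w
    simp only [eta, Pi.smul_apply, smul_eq_mul]; ring
  rw [hs, ← rho_sq hunit, ← mul_pow]
  rcases hr.eq_or_lt with h | h
  · rw [← h]; simp
  · rw [div_mul_cancel₀ _ h.ne']

lemma lo_radial {p v : M4} (hunit : eta v v = 1) {φ : ℝ → ℝ} (hφ : StrictMono φ) (x : M4) :
    tau p v (radial p v φ x) - rho p v (radial p v φ x) = φ (tau p v x - rho p v x) := by
  rw [tau_radial hunit, rho_radial hunit hφ]; ring

lemma hi_radial {p v : M4} (hunit : eta v v = 1) {φ : ℝ → ℝ} (hφ : StrictMono φ) (x : M4) :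
    tau p v (radial p v φ x) + rho p v (radial p v φ x) = φ (tau p v x + rho p v x) := by
  rw [tau_radial hunit, rho_radial hunit hφ]; ring

lemma radial_radial {p v : M4} (hunit : eta v v = 1) {φ ψ : ℝ → ℝ} (hφ : StrictMono φ)
    (h : ∀ s, ψ (φ s) = s) (x : M4) : radial p v ψ (radial p v φ x) = x := by
  have hlo := lo_radial (p := p) hunit hφ x
  have hhi := hi_radial (p := p) hunit hφ x
  rw [radial, hlo, hhi, h, h, perp_radial hunit, rho_radial hunit hφ, smul_smul]
  conv_rhs => rw [decomp p v x]
  congr 1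
  · congr 2; ring
  · rcases (rho_nonneg p v x).eq_or_lt with h0 | h0
    · rw [perp_eq_zero hunit h0.symm, smul_zero]
    · have hm : φ (tau p v x - rho p v x) < φ (tau p v x + rho p v x) := hφ (by linarith)
      have hm' : φ (tau p v x + rho p v x) - φ (tau p v x - rho p v x) ≠ 0 := by linarith
      have hr := h0.ne'
      convert one_smul ℝ (perp p v x) using 2
      generalize φ (tau p v x + rho p v x) - φ (tau p v x - rho p v x) = d at *
      field_simp
      ring

/-! ### The theorem -/

/-- Local light-cone version: a nontrivial equivalence relation invariant under
every local-cone automorphism relative to `A` is observed simultaneity or its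
dual. -/
theorem malament_local_cones (p v : M4) (hunit : eta v v = 1) (hfut : v 0 > 0)
    (A : Set M4) (hA : A = {x | ∃ t : ℝ, x = p + t • v})
    (R : M4 → M4 → Prop)
    (hequiv : Equivalence R)
    (hnontriv₁ : ¬ ∀ x y : M4, R x y)
    (hnontriv₂ : ∃ a ∈ A, ∃ x ∉ A, R a x)
    (hinv : ∀ f : M4 → M4, Function.Bijective f →
      f '' A = A →
      (∀ a ∈ A, ∀ b ∈ A, tau p v a < tau p v b → tau p v (f a) < tau p v (f b)) →
      (∀ a ∈ A, ∀ x : M4, onBackwardCone a x ↔ onBackwardCone (f a) (f x)) →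
      (∀ a ∈ A, ∀ x : M4, onForwardCone a x ↔ onForwardCone (f a) (f x)) →
      ∀ x y : M4, R x y ↔ R (f x) (f y)) :
    (∀ x y : M4, R x y ↔ tau p v x + rho p v x = tau p v y + rho p v y) ∨
    (∀ x y : M4, R x y ↔ tau p v x - rho p v x = tau p v y - rho p v y) := by
  subst hA
  have hmem : ∀ x : M4, x ∈ {x : M4 | ∃ t : ℝ, x = p + t • v} ↔ rho p v x = 0 :=
    fun x => mem_line_iff hunit x
  refine core (fun t : ℝ => p + t • v) (fun x => tau p v x - rho p v x)
    (fun x => tau p v x + rho p v x) ?_ ?_ ?_ ?_ ?_ R hequiv hnontriv₁ ?_ ?_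
  · intro t; simp [tau_line hunit, rho_line hunit]
  · intro t; simp [tau_line hunit, rho_line hunit]
  · intro x hx
    have h0 : rho p v x = 0 := by linarith
    simpa [h0] using eq_line hunit h0
  · intro x
    have := rho_nonneg p v x
    linarith
  · intro φ ψ h1 h2 h3 h4
    exact ⟨radial p v φ, Function.bijective_iff_has_inverse.mpr ⟨radial p v ψ,
      radial_radial hunit h1 h3, radial_radial hunit h2 h4⟩,
      lo_radial hunit h1, hi_radial hunit h1⟩
  · obtain ⟨a, ⟨t, rfl⟩, x, hx, h⟩ := hnontriv₂
    refine ⟨t, x, fun e => hx ((hmem x).2 ?_), h⟩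
    linarith
  · intro f hf φ hφ hlo hhi
    have hfA : ∀ x, rho p v (f x) = 0 ↔ rho p v x = 0 := by
      intro x
      have h1 := hlo x
      have h2 := hhi x
      constructor
      · intro h
        have := hφ.injective (a₁ := tau p v x - rho p v x) (a₂ := tau p v x + rho p v x)
          (by linarith)
        linarith
      · intro h
        rw [h, sub_zero] at h1
        rw [h, add_zero] at h2
        linarith
    have hft : ∀ t : ℝ, f (p + t • v) = p + φ t • v := by
      intro t
      have h0 := (hfA (p + t • v)).2 (rho_line hunit t)
      have h1 := hlo (p + t • v)
      rw [h0, tau_line hunit, rho_line hunit, sub_zero, sub_zero] at h1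
      rw [eq_line hunit h0, h1]
    apply hinv f hf
    · ext y
      constructor
      · rintro ⟨x, hx, rfl⟩
        exact (hmem _).2 ((hfA x).2 ((hmem x).1 hx))
      · intro hy
        obtain ⟨x, rfl⟩ := hf.surjective y
        exact ⟨x, (hmem x).2 ((hfA x).1 ((hmem _).1 hy)), rfl⟩
    · rintro _ ⟨t, rfl⟩ _ ⟨t', rfl⟩ h
      rw [tau_line hunit, tau_line hunit] at h
      rw [hft, hft, tau_line hunit, tau_line hunit]
      exact hφ h
    · rintro _ ⟨t, rfl⟩ x
      rw [hft, backward_iff hunit hfut, backward_iff hunit hfut, hhi, hφ.injective.eq_iff]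
    · rintro _ ⟨t, rfl⟩ x
      rw [hft, forward_iff hunit hfut, forward_iff hunit hfut, hlo, hφ.injective.eq_iff]
end

section
/- Let v and w be future-directed unit timelike vectors in Minkowski spacetime and let p, q be events. The family of all Poincaré–Einstein simultaneity hyperplanes of the inertial observer A = {p + t•v : t ∈ ℝ} coincides with that of the inertial observer B = {q + t•w : t ∈ ℝ} if and only if v = w: the set of sets { {x : η(x − p, v) = s} : s ∈ ℝ } equals the set of sets { {x : η(x − q, w) = s} : s ∈ ℝ } if and only if v = w. (So two inertial observers share the same set of PE realities iff their world-lines are parallel; otherwise no PE reality of one ever coincides with a PE reality of the other.) -/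
theorem eta_add_left (x y z : M4) : eta (x + y) z = eta x z + eta y z := by
  simp only [eta, Pi.add_apply]; ring

theorem eta_sub_left (x y z : M4) : eta (x - y) z = eta x z - eta y z := by
  simp only [eta, Pi.sub_apply]; ring

theorem eta_smul_left (c : ℝ) (x z : M4) : eta (c • x) z = c * eta x z := by
  simp only [eta, Pi.smul_apply, smul_eq_mul]; ring

/-- Nondegeneracy of the Minkowski form, tested on the standard basis. -/
theorem eq_smul_of_eta {v w : M4} {c : ℝ} (h : ∀ z, eta z w = c * eta z v) : w = c • v := by
  funext i
  have hi := h (Pi.single i 1)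
  fin_cases i <;> simp [eta] at hi ⊢ <;> linarith

/-- Two inertial observers have the same family of Poincaré–Einstein
simultaneity hyperplanes iff their world-lines are parallel (same velocity). -/
theorem same_PE_hyperplanes_iff (p v q w : M4)
    (hvunit : eta v v = 1) (hwunit : eta w w = 1)
    (hvfut : v 0 > 0) (hwfut : w 0 > 0) :
    {S : Set M4 | ∃ s : ℝ, S = {x | eta (x - p) v = s}} =
      {S : Set M4 | ∃ s : ℝ, S = {x | eta (x - q) w = s}} ↔ v = w := by
  constructor
  · intro h
    have hmem : {x | eta (x - p) v = 0} ∈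
        {S : Set M4 | ∃ s : ℝ, S = {x | eta (x - q) w = s}} := h ▸ ⟨0, rfl⟩
    obtain ⟨s, hs⟩ := hmem
    have key : ∀ x, eta (x - p) v = 0 → eta (x - q) w = s := fun x hx => by
      have : x ∈ {x | eta (x - p) v = 0} := hx
      rwa [hs] at this
    have hp : eta (p - q) w = s := key p (by simp [eta])
    have hz : ∀ z, eta z w = eta v w * eta z v := fun z => by
      have h1 := key (p + (z - eta z v • v)) (by
        simp only [eta_sub_left, eta_add_left, eta_smul_left, hvunit]; ring)
      simp only [eta_sub_left, eta_add_left, eta_smul_left] at h1 hp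
      linarith
    have hw := eq_smul_of_eta hz
    have h0 : w 0 = eta v w * v 0 := congrFun hw 0
    have hc : 0 < eta v w := by
      rw [h0] at hwfut
      exact pos_of_mul_pos_left hwfut hvfut.le
    have hsq : eta v w * eta v w = 1 := by
      have h1 := hz w
      have hsymm : eta w v = eta v w := by simp only [eta]; ring
      rw [hwunit, hsymm] at h1
      exact h1.symm
    have h1 : eta v w = 1 := by nlinarith
    rw [h1, one_smul] at hw
    exact hw.symm
  · rintro rfl
    ext S
    constructor
    · rintro ⟨s, rfl⟩
      refine ⟨s + eta (p - q) v, ?_⟩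
      ext x
      simp only [Set.mem_ofPred_eq, eta_sub_left]
      constructor <;> intro h <;> linarith
    · rintro ⟨s, rfl⟩
      refine ⟨s - eta (p - q) v, ?_⟩
      ext x
      simp only [Set.mem_ofPred_eq, eta_sub_left]
      constructor <;> intro h <;> linarith
end
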